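/- Let Ω ⊂ ℝ_{≥0}^n be a compact nonempty symmetric set and define ‖v‖_Ω = max{⟨v,w⟩ : w ∈ Ω}. For k ∈ ℕ let V(k,n) ∈ ℤ_{≥0}^n be the vector whose first n − (k mod n) coordinates equal ⌊k/n⌋ and whose last (k mod n) coordinates equal ⌈k/n⌉. Then min{ ‖v‖_Ω : v ∈ ℤ_{≥0}^n, Σ_{i=1}^n v_i = k } = ‖V(k,n)‖_Ω. -/

import Mathlib

/-!
Since `Ω` is symmetric, it suffices to find, for every `v` with coordinate sum `k` and every `w ∈ Ω`,
a rearrangement `w'` of `w` with `⟨V, w⟩ ≤ ⟨v, w'⟩`. As `V` is nondecreasing, sorting `w` can only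
increase `⟨V, w⟩` (rearrangement inequality), and applying a permutation to `w` allows `v` to be
taken sorted as well. For sorted `v` the difference `v - V` changes sign at most once, from negative
to positive, because `V` takes only two consecutive values. As `v - V` sums to zero, its pairing with
the sorted vector `w` is then nonnegative (`sum_mul_le_of_single_crossing`).
-/

open Finset

/-- If `a` and `b` have equal sums, and `w` is at least as large wherever `a < b` as wherever
`b < a`, then passing from `a` to `b` moves weight towards larger values of `w`. -/
lemma sum_mul_le_of_single_crossing {n : ℕ} (a b w : Fin n → ℝ)
    (hsum : ∑ i, a i = ∑ i, b i)
    (hcross : ∀ i j, a i < b i → b j < a j → w j ≤ w i) :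
    ∑ i, a i * w i ≤ ∑ i, b i * w i := by
  -- A threshold `t` separates the values of `w` where `b < a` from those where `a < b`.
  obtain ⟨t, ht₁, ht₂⟩ : ∃ t, (∀ i, a i < b i → t ≤ w i) ∧ ∀ j, b j < a j → w j ≤ t := by
    by_cases hP : (univ.filter fun i => a i < b i).Nonempty
    · obtain ⟨i₀, hi₀, hmin⟩ := exists_min_image _ w hP
      simp only [mem_filter, mem_univ, true_and] at hi₀ hmin
      exact ⟨w i₀, hmin, fun j hj => hcross i₀ j hi₀ hj⟩
    · have hle : ∀ i, b i ≤ a i := by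
        simpa [Finset.not_nonempty_iff_eq_empty, Finset.filter_eq_empty_iff] using hP
      have heq := (Finset.sum_eq_sum_iff_of_le (fun i _ => hle i)).1 hsum.symm
      exact ⟨0, fun i hi => absurd hi (hle i).not_gt,
        fun j hj => absurd (heq j (mem_univ j)) hj.ne⟩
  have hnn : 0 ≤ ∑ i, (b i - a i) * (w i - t) := by
    refine sum_nonneg fun i _ => ?_
    rcases lt_trichotomy (a i) (b i) with h | h | h
    · exact mul_nonneg (sub_nonneg.2 h.le) (sub_nonneg.2 (ht₁ i h))
    · simp [h]
    · exact mul_nonneg_of_nonpos_of_nonpos (sub_nonpos.2 h.le) (sub_nonpos.2 (ht₂ i h))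
  -- The `t` contribution vanishes because the two sums agree.
  have hexp : ∑ i, (b i - a i) * (w i - t)
      = ∑ i, b i * w i - ∑ i, a i * w i - (∑ i, b i - ∑ i, a i) * t := by
    rw [sub_mul, sum_mul, sum_mul, ← sum_sub_distrib, ← sum_sub_distrib, ← sum_sub_distrib]
    exact sum_congr rfl fun i _ => by ring
  rw [hexp, hsum, sub_self, zero_mul, sub_zero] at hnn
  linarith

lemma sum_balanced (n k : ℕ) (hn : 0 < n) :
    ∑ i : Fin n, (if (i : ℕ) < n - k % n then k / n else k / n + 1) = k := by
  have hr : k % n < n := Nat.mod_lt k hn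
  have hle : n - k % n + k % n = n := by omega
  rw [Fin.sum_univ_eq_sum_range (fun i => if i < n - k % n then k / n else k / n + 1) n]
  conv_lhs => rw [← hle]
  rw [sum_range_add]
  have h₁ : ∀ i ∈ range (n - k % n),
      (if i < n - k % n + k % n - k % n then k / n else k / n + 1) = k / n := by
    intro i hi
    rw [mem_range] at hi
    exact if_pos (by omega)
  have h₂ : ∀ i ∈ range (k % n),
      (if n - k % n + i < n - k % n + k % n - k % n then k / n else k / n + 1) = k / n + 1 :=
    fun i _ => if_neg (by omega)
  simp only [hle] at h₁ h₂ ⊢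
  rw [sum_congr rfl h₁, sum_congr rfl h₂]
  simp only [sum_const, card_range, smul_eq_mul]
  have := Nat.div_add_mod k n
  calc (n - k % n) * (k / n) + k % n * (k / n + 1)
      = (n - k % n + k % n) * (k / n) + k % n := by ring
    _ = k := by rw [hle, this]

/-- For every `v` with the same sum as a nondecreasing `V` taking only the values `q` and `q + 1`,
some rearrangement of `w` pairs with `v` at least as much as `w` pairs with `V`. -/
lemma exists_perm_sum_le {n : ℕ} (q : ℕ) (V v : Fin n → ℕ) (hmono : Monotone V)
    (hval : ∀ i, V i = q ∨ V i = q + 1) (hsum : ∑ i, V i = ∑ i, v i) (w : Fin n → ℝ) :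
    ∃ σ : Equiv.Perm (Fin n), ∑ i, (V i : ℝ) * w i ≤ ∑ i, (v i : ℝ) * w (σ i) := by
  set s := Tuple.sort w with hs
  set t := Tuple.sort v with ht
  have hw : Monotone (w ∘ s) := Tuple.monotone_sort w
  have hv : Monotone (v ∘ t) := Tuple.monotone_sort v
  refine ⟨t.symm.trans s, ?_⟩
  have h₁ : ∑ i, (V i : ℝ) * w i ≤ ∑ i, (V i : ℝ) * w (s i) := by
    have hVmono : Monotone fun i => (V i : ℝ) := fun i j h => Nat.cast_le.2 (hmono h)
    have := (hVmono.monovary hw).sum_mul_comp_perm_le_sum_mul (σ := s.symm)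
    simpa using this
  have h₂ : ∑ i, (V i : ℝ) * w (s i) ≤ ∑ i, (v (t i) : ℝ) * w (s i) := by
    refine sum_mul_le_of_single_crossing _ _ (fun i => w (s i)) ?_ ?_
    · rw [Equiv.sum_comp t fun i => (v i : ℝ)]
      exact_mod_cast hsum
    · intro i j hi hj
      have hi' : V i < v (t i) := by exact_mod_cast hi
      have hj' : v (t j) < V j := by exact_mod_cast hj
      refine hw (le_of_not_gt fun hij => ?_)
      -- If `i < j`, then `q ≤ V i < v (t i) ≤ v (t j) < V j ≤ q + 1`, which is impossible.
      have hij' : v (t i) ≤ v (t j) := hv hij.le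
      have := hval i
      have := hval j
      omega
  have h₃ : ∑ i, (v (t i) : ℝ) * w (s i) = ∑ i, (v i : ℝ) * w (s (t.symm i)) := by
    rw [← Equiv.sum_comp t fun i => (v i : ℝ) * w (s (t.symm i))]
    simp
  exact h₁.trans (h₂.trans h₃.le)

/-- Collapse of the Gutt–Hutchings formula for symmetric convex toric domains:
the minimum of `‖v‖_Ω` over nonnegative integer vectors of coordinate sum `k`
equals `‖V(k,n)‖_Ω` for the balanced vector `V(k,n)`. -/
theorem stmt_2 (n : ℕ) (hn : 0 < n) (Ω : Set (Fin n → ℝ))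
    (hcomp : IsCompact Ω) (hne : Ω.Nonempty)
    (hnonneg : ∀ x ∈ Ω, ∀ i, 0 ≤ x i)
    (hsymm : ∀ σ : Equiv.Perm (Fin n), ∀ x ∈ Ω, (fun i => x (σ i)) ∈ Ω)
    (k : ℕ)
    (V : Fin n → ℕ)
    (hV : V = fun i : Fin n => if (i : ℕ) < n - k % n then k / n else k / n + 1) :
    sInf {c : ℝ | ∃ v : Fin n → ℕ, (∑ i, v i) = k ∧
        c = sSup ((fun w => ∑ i, (v i : ℝ) * w i) '' Ω)} =
      sSup ((fun w => ∑ i, (V i : ℝ) * w i) '' Ω) := by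
  have hVsum : ∑ i, V i = k := by rw [hV]; exact sum_balanced n k hn
  have hmono : Monotone V := by
    intro i j hij
    have hij' : (i : ℕ) ≤ j := hij
    simp only [hV]
    split_ifs <;> omega
  have hval : ∀ i, V i = k / n ∨ V i = k / n + 1 := by
    intro i
    simp only [hV]
    split_ifs <;> simp
  refine IsLeast.csInf_eq ⟨⟨V, hVsum, rfl⟩, ?_⟩
  rintro c ⟨v, hvsum, rfl⟩
  have hbdd : BddAbove ((fun w : Fin n → ℝ => ∑ i, (v i : ℝ) * w i) '' Ω) :=
    (hcomp.image (by fun_prop)).bddAbove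
  refine csSup_le (hne.image _) ?_
  rintro _ ⟨w, hw, rfl⟩
  obtain ⟨σ, hσ⟩ := exists_perm_sum_le (k / n) V v hmono hval (hVsum.trans hvsum.symm) w
  exact hσ.trans (le_csSup hbdd ⟨_, hsymm σ w hw, rfl⟩)
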